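/- Let n ≥ 2 be an integer and let G be the grid P_n □ P_3. If j is an integer such that 3 ≤ j ≤ n−2, then 3j+1 ∈ S_SC(G). -/

import Mathlib

/-!  Common definitions: oriented graphs, geodesic convexity, convexity number,
strong convexity spectrum, and grid graphs. -/

variable {V : Type*}

/-- A directed walk of length `k` from `u` to `v` along the arc relation `A`,
encoded by the function `f` listing its vertices. -/
def IsDirWalk (A : V → V → Prop) (k : ℕ) (f : ℕ → V) (u v : V) : Prop :=
  f 0 = u ∧ f k = v ∧ ∀ i, i < k → A (f i) (f (i + 1))

/-- There is a directed walk from `u` to `v`. -/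
def DirReachable (A : V → V → Prop) (u v : V) : Prop :=
  ∃ k f, IsDirWalk A k f u v

/-- A digraph (given by its arc relation) is strongly connected. -/
def StrongConnected (A : V → V → Prop) : Prop :=
  ∀ u v : V, DirReachable A u v

/-- A `uv`-geodesic: a directed walk from `u` to `v` of minimum possible length
(such a walk is automatically a directed path). -/
def IsGeodesic (A : V → V → Prop) (k : ℕ) (f : ℕ → V) (u v : V) : Prop :=
  IsDirWalk A k f u v ∧ ∀ k' f', IsDirWalk A k' f' u v → k ≤ k'

/-- A nonempty vertex set `C` is convex if every vertex lying on a geodesic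
between two vertices of `C` (in either direction) belongs to `C`. -/
def DConvex (A : V → V → Prop) (C : Set V) : Prop :=
  C.Nonempty ∧ ∀ u ∈ C, ∀ v ∈ C, ∀ k f, IsGeodesic A k f u v → ∀ i ≤ k, f i ∈ C

/-- `A` is an orientation of the simple graph `G`: every arc is along an edge,
every edge gets an arc, and no edge gets both directions. -/
def IsOrientation (G : SimpleGraph V) (A : V → V → Prop) : Prop :=
  (∀ x y, A x y → G.Adj x y) ∧ (∀ x y, G.Adj x y → A x y ∨ A y x) ∧
    (∀ x y, A x y → ¬ A y x)

/-- The convexity number of a digraph: the maximum cardinality of a proper convex set. -/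
noncomputable def convexityNumber [Fintype V] (A : V → V → Prop) : ℕ :=
  sSup {k | ∃ C : Set V, DConvex A C ∧ C ≠ Set.univ ∧ C.ncard = k}

/-- The strong convexity spectrum of a graph: the set of convexity numbers of
its strongly connected orientations. -/
def strongConvexitySpectrum [Fintype V] (G : SimpleGraph V) : Set ℕ :=
  {k | ∃ A : V → V → Prop, IsOrientation G A ∧ StrongConnected A ∧ convexityNumber A = k}

/-- The grid graph `P_n □ P_m`. -/
def gridGraph (n m : ℕ) : SimpleGraph (Fin n × Fin m) :=
  (SimpleGraph.pathGraph n).boxProd (SimpleGraph.pathGraph m)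

/-!
Number the rows by integers and the columns by `0, 1, 2`. The orientation makes every unit square
in the rows `≤ -2` and in the rows `≥ 2` a directed `4`-cycle. In a bipartite oriented graph a
convex set contains every directed `4`-cycle of which it contains an arc, so a convex set containing
an arc of one of these two regions contains the whole region. In the rows between them two directed
closed walks cross at `(0, 1)`: a long one through the upper region and the ring
`(0, 1) (0, 2) (1, 2) (1, 1)`, which leads to the lower region.

With `j` rows above the row `0`, the upper region and the four vertices `(-1, 0)`, `(-1, 1)`,
`(0, 0)`, `(0, 1)` form a set of `3 j + 1` vertices. It is convex because an excursion outside it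
can only return to `(0, 1)` or `(0, 0)`, which are reached faster through the inside. Conversely, a
convex set that is not contained in it captures the ring; if it has more than nine vertices it
then captures `(0, 0)` as well, hence both closed walks, hence every vertex of the grid.
-/

open Set

section Walks

variable {A : V → V → Prop} {k l : ℕ} {u v w : V}

/-- There is a directed walk of length exactly `k` from `u` to `v`; this is `IsDirWalk` with the
listing of the vertices forgotten, so that walks can be concatenated and decomposed freely. -/
def HasDirWalk (A : V → V → Prop) (k : ℕ) (u v : V) : Prop :=
  ∃ f, IsDirWalk A k f u v

theorem IsDirWalk.hasDirWalk_segment {f : ℕ → V} (hf : IsDirWalk A k f u v) {a b : ℕ}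
    (hab : a ≤ b) (hbk : b ≤ k) : HasDirWalk A (b - a) (f a) (f b) :=
  ⟨fun i => f (a + i), rfl, congrArg f (by omega), fun i hi => hf.2.2 (a + i) (by omega)⟩

theorem IsDirWalk.cons {f : ℕ → V} (h : A u v) (hf : IsDirWalk A k f v w) :
    IsDirWalk A (k + 1) (fun i => Nat.casesOn i u f) u w := by
  refine ⟨rfl, hf.2.1, fun i hi => ?_⟩
  cases i with
  | zero => simpa [hf.1] using h
  | succ i => exact hf.2.2 i (by omega)

theorem hasDirWalk_zero : HasDirWalk A 0 u v ↔ u = v :=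
  ⟨fun ⟨_, h0, hk, _⟩ => h0.symm.trans hk, fun h => ⟨fun _ => u, rfl, h, by simp⟩⟩

theorem HasDirWalk.cons (h : A u v) (hw : HasDirWalk A k v w) : HasDirWalk A (k + 1) u w :=
  let ⟨_, hf⟩ := hw
  ⟨_, hf.cons h⟩

theorem HasDirWalk.single (h : A u v) : HasDirWalk A 1 u v :=
  (hasDirWalk_zero.2 rfl).cons h

theorem HasDirWalk.exists_cons (h : HasDirWalk A (k + 1) u w) :
    ∃ v, A u v ∧ HasDirWalk A k v w := by
  obtain ⟨f, hf⟩ := h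
  obtain ⟨h0, hk, hstep⟩ := id hf
  exact ⟨f 1, h0 ▸ hstep 0 (by omega), hk ▸ hf.hasDirWalk_segment (by omega) le_rfl⟩

theorem HasDirWalk.exists_of_forall_out_arc_eq (h : HasDirWalk A k u w) (huw : u ≠ w)
    (huv : ∀ x, A u x → x = v) : ∃ l, k = l + 1 ∧ HasDirWalk A l v w := by
  cases k with
  | zero => exact absurd (hasDirWalk_zero.1 h) huw
  | succ l =>
    obtain ⟨x, hux, hxw⟩ := h.exists_cons
    exact ⟨l, rfl, huv x hux ▸ hxw⟩

theorem HasDirWalk.exists_snoc (h : HasDirWalk A (k + 1) u w) :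
    ∃ v, HasDirWalk A k u v ∧ A v w := by
  obtain ⟨f, hf⟩ := h
  obtain ⟨h0, hk, hstep⟩ := id hf
  exact ⟨f k, h0 ▸ hf.hasDirWalk_segment (Nat.zero_le k) (by omega), hk ▸ hstep k (by omega)⟩

theorem HasDirWalk.trans (h : HasDirWalk A k u v) (h' : HasDirWalk A l v w) :
    HasDirWalk A (k + l) u w := by
  induction k generalizing u with
  | zero => rwa [hasDirWalk_zero.1 h, Nat.zero_add]
  | succ k ih =>
    obtain ⟨x, hux, hxv⟩ := h.exists_cons
    rw [Nat.add_right_comm]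
    exact (ih hxv).cons hux

theorem DirReachable.trans (h : DirReachable A u v) (h' : DirReachable A v w) :
    DirReachable A u w :=
  let ⟨k, hk⟩ := h
  let ⟨l, hl⟩ := h'
  ⟨k + l, HasDirWalk.trans hk hl⟩

theorem DirReachable.single (h : A u v) : DirReachable A u v :=
  ⟨1, HasDirWalk.single h⟩

theorem DirReachable.exists_isGeodesic (h : DirReachable A u v) :
    ∃ k f, IsGeodesic A k f u v := by
  classical
  have h' : ∃ k, HasDirWalk A k u v := h
  obtain ⟨f, hf⟩ := Nat.find_spec h'
  exact ⟨_, f, hf, fun k' f' hf' => Nat.find_min' h' ⟨f', hf'⟩⟩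

theorem HasDirWalk.even_iff {s : Set V} (hs : ∀ a b, A a b → (a ∈ s ↔ b ∉ s))
    (h : HasDirWalk A k u v) : Even k ↔ (u ∈ s ↔ v ∈ s) := by
  induction k generalizing u with
  | zero => simp [hasDirWalk_zero.1 h]
  | succ k ih =>
    obtain ⟨x, hux, hxv⟩ := h.exists_cons
    rw [Nat.even_add_one, ih hxv, hs u x hux]
    tauto

theorem exists_mem_succ_notMem {T : Set V} {f : ℕ → V} {a b : ℕ} (hab : a ≤ b) (ha : f a ∈ T)
    (hb : f b ∉ T) : ∃ i, a ≤ i ∧ i < b ∧ f i ∈ T ∧ f (i + 1) ∉ T := by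
  induction b, hab using Nat.le_induction with
  | base => exact absurd ha hb
  | succ b hab ih =>
    by_cases hfb : f b ∈ T
    · exact ⟨b, hab, b.lt_succ_self, hfb, hb⟩
    · obtain ⟨i, hai, hib, hi⟩ := ih hfb
      exact ⟨i, hai, hib.trans b.lt_succ_self, hi⟩

end Walks

section Convexity

variable {A : V → V → Prop} {S : Set V} {u v w : V}

theorem DConvex.mem_of_adj (hS : DConvex A S) (hu : u ∈ S) (hv : v ∈ S) {k : ℕ} (huw : A u w)
    (hwv : HasDirWalk A k w v) (hmin : ∀ l, HasDirWalk A l u v → k + 1 ≤ l) : w ∈ S := by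
  obtain ⟨f, hf⟩ := hwv
  have hgeo := hS.2 u hu v hv (k + 1) _ ⟨hf.cons huw, fun l g hg => hmin l ⟨g, hg⟩⟩ 1 (by omega)
  exact hf.1 ▸ hgeo

theorem DConvex.exists_arc_leaving (hS : DConvex A S) (huv : DirReachable A u v) {T : Set V}
    (hu : u ∈ S) (hv : v ∈ S) (huT : u ∈ T) (hvT : v ∉ T) :
    ∃ a ∈ S ∩ T, ∃ b ∈ S \ T, A a b := by
  obtain ⟨k, f, hf⟩ := huv.exists_isGeodesic
  obtain ⟨i, -, hik, hi, hi'⟩ := exists_mem_succ_notMem (T := T) (f := f) k.zero_le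
    (hf.1.1 ▸ huT) (hf.1.2.1 ▸ hvT)
  have hmem := hS.2 u hu v hv k f hf
  exact ⟨f i, ⟨hmem i hik.le, hi⟩, f (i + 1), ⟨hmem (i + 1) hik, hi'⟩, hf.1.2.2 i hik⟩

theorem DConvex.exists_out_arc (hS : DConvex A S) (hreach : ∀ u ∈ S, ∀ v ∈ S, DirReachable A u v)
    (hnt : S.Nontrivial) (hu : u ∈ S) : ∃ v ∈ S, A u v := by
  obtain ⟨v, hv, hvu⟩ := hnt.exists_ne u
  obtain ⟨a, ⟨-, rfl⟩, b, hb, hab⟩ :=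
    hS.exists_arc_leaving (hreach u hu v hv) hu hv (mem_singleton u) hvu
  exact ⟨b, hb.1, hab⟩

theorem DConvex.exists_in_arc (hS : DConvex A S) (hreach : ∀ u ∈ S, ∀ v ∈ S, DirReachable A u v)
    (hnt : S.Nontrivial) (hu : u ∈ S) : ∃ v ∈ S, A v u := by
  obtain ⟨v, hv, hvu⟩ := hnt.exists_ne u
  obtain ⟨a, ha, b, hb, hab⟩ :=
    hS.exists_arc_leaving (hreach v hv u hu) (T := {u}ᶜ) hv hu hvu (by simp)
  obtain rfl : b = u := by simpa using hb.2
  exact ⟨a, ha.1, hab⟩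

theorem DConvex.mem_of_forall_out_arc_eq (hS : DConvex A S)
    (hreach : ∀ u ∈ S, ∀ v ∈ S, DirReachable A u v) (hnt : S.Nontrivial) (hu : u ∈ S)
    (h : ∀ w, A u w → w = v) : v ∈ S := by
  obtain ⟨w, hw, huw⟩ := hS.exists_out_arc hreach hnt hu
  exact h w huw ▸ hw

theorem DConvex.mem_of_forall_in_arc_eq (hS : DConvex A S)
    (hreach : ∀ u ∈ S, ∀ v ∈ S, DirReachable A u v) (hnt : S.Nontrivial) (hu : u ∈ S)
    (h : ∀ w, A w u → w = v) : v ∈ S := by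
  obtain ⟨w, hw, hwu⟩ := hS.exists_in_arc hreach hnt hu
  exact h w hwu ▸ hw

theorem dConvex_of_shorter_detour (hne : S.Nonempty)
    (hshort : ∀ a ∈ S, ∀ b ∉ S, ∀ c ∉ S, ∀ d ∈ S, A a b → A c d → ∀ k, HasDirWalk A k b c →
      ∃ l < k + 2, HasDirWalk A l a d) : DConvex A S := by
  refine ⟨hne, fun u hu v hv k f hf i hik => ?_⟩
  by_contra hfi
  obtain ⟨s, -, hsi, hs, hs'⟩ :=
    exists_mem_succ_notMem (T := S) (f := f) i.zero_le (hf.1.1 ▸ hu) hfi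
  obtain ⟨r, hir, hrk, hr, hr'⟩ :=
    exists_mem_succ_notMem (T := Sᶜ) hik hfi (by simpa [hf.1.2.1] using hv)
  obtain ⟨l, hl, hdetour⟩ := hshort _ hs _ hs' _ hr _ (not_notMem.1 hr')
    (hf.1.2.2 s (by omega)) (hf.1.2.2 r hrk) _ (hf.1.hasDirWalk_segment (by omega) hrk.le)
  have hprefix := hf.1.1 ▸ hf.1.hasDirWalk_segment s.zero_le (by omega)
  have hsuffix := hf.1.2.1 ▸ hf.1.hasDirWalk_segment (a := r + 1) hrk le_rfl
  obtain ⟨g, hg⟩ := (hprefix.trans hdetour).trans hsuffix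
  have := hf.2 _ g hg
  omega

/-- Closure of a vertex set under two local rules: it contains the middle vertex of every directed
path of length two joining two of its vertices, and every directed `4`-cycle of which it contains
an arc. Convex sets of bipartite oriented graphs and strong components both have this property. -/
structure IsCellClosed (A : V → V → Prop) (S : Set V) : Prop where
  mem_of_path {x z y : V} : A x z → A z y → x ≠ y → x ∈ S → y ∈ S → z ∈ S
  mem_of_cycle {w x y z : V} :
    A w x → A x y → A y z → A z w → w ∈ S → x ∈ S → y ∈ S ∧ z ∈ S

theorem DConvex.isCellClosed (hS : DConvex A S) (hanti : ∀ a b, A a b → ¬ A b a) {s : Set V}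
    (hs : ∀ a b, A a b → (a ∈ s ↔ b ∉ s)) : IsCellClosed A S := by
  have hpath {x z y : V} (hxz : A x z) (hzy : A z y) (hxy : x ≠ y) (hx : x ∈ S) (hy : y ∈ S) :
      z ∈ S := by
    refine hS.mem_of_adj hx hy hxz (.single hzy) fun l hl => ?_
    have heven : Even l := (hl.even_iff hs).2 (by grind)
    have hl0 : l ≠ 0 := by
      rintro rfl
      exact hxy (hasDirWalk_zero.1 hl)
    grind
  refine ⟨hpath, fun {w x y z} hwx hxy hyz hzw hw hx => ?_⟩
  have hy : y ∈ S := by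
    refine hS.mem_of_adj hx hw hxy (.cons hyz (.single hzw)) fun l hl => ?_
    have hodd : ¬ Even l := by
      rw [hl.even_iff hs]
      grind
    have hl1 : l ≠ 1 := by
      rintro rfl
      obtain ⟨w', hxw, hw'⟩ := hl.exists_cons
      exact hanti w x hwx (hasDirWalk_zero.1 hw' ▸ hxw)
    grind
  have hyw : y ≠ w := by
    rintro rfl
    exact hanti x y hxy hwx
  exact ⟨hy, hpath hyz hzw hyw hy hw⟩

/-- The strong component of `t`: the vertices reachable from `t` from which `t` is reachable. -/
def strongComponent (A : V → V → Prop) (t : V) : Set V :=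
  {u | DirReachable A t u ∧ DirReachable A u t}

theorem isCellClosed_strongComponent (t : V) : IsCellClosed A (strongComponent A t) where
  mem_of_path hxz hzy _ hx hy := ⟨hx.1.trans (.single hxz), (DirReachable.single hzy).trans hy.2⟩
  mem_of_cycle {w x y z} _ hxy hyz hzw hw hx := by
    have hty : DirReachable A t y := hx.1.trans (.single hxy)
    have hzt : DirReachable A z t := (DirReachable.single hzw).trans hw.2
    exact ⟨⟨hty, (DirReachable.single hyz).trans hzt⟩, ⟨hty.trans (.single hyz), hzt⟩⟩

theorem IsDirWalk.mem_strongComponent {t : V} {k : ℕ} {f : ℕ → V} (hf : IsDirWalk A k f t t)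
    {i : ℕ} (hi : i ≤ k) : f i ∈ strongComponent A t := by
  constructor
  · have := hf.hasDirWalk_segment i.zero_le hi
    exact ⟨_, hf.1 ▸ this⟩
  · have := hf.hasDirWalk_segment hi le_rfl
    exact ⟨_, hf.2.1 ▸ this⟩

theorem dirReachable_of_mem_strongComponent {t : V} (hu : u ∈ strongComponent A t)
    (hv : v ∈ strongComponent A t) : DirReachable A u v :=
  hu.2.trans hv.1

end Convexity

section Preimage

variable {W : Type*} {e : V → W} {A : W → W → Prop} {k : ℕ} {u v : V}

theorem isDirWalk_preimage (he : e.Injective) {f : ℕ → V} :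
    IsDirWalk (e ⁻¹'o A) k f u v ↔ IsDirWalk A k (e ∘ f) (e u) (e v) := by
  simp [IsDirWalk, he.eq_iff, Order.Preimage]

theorem IsDirWalk.exists_lift (hA : ∀ p q, A p q → q ∈ range e) {g : ℕ → W}
    (hg : IsDirWalk A k g (e u) (e v)) (he : e.Injective) :
    ∃ f, IsDirWalk (e ⁻¹'o A) k f u v ∧ ∀ i ≤ k, e (f i) = g i := by
  have hrange : ∀ i ≤ k, g i ∈ range e
    | 0, _ => ⟨u, hg.1.symm⟩
    | i + 1, hi => hA _ _ (hg.2.2 i hi)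
  have : Nonempty V := ⟨u⟩
  have hlift : ∀ i ≤ k, e (e.invFun (g i)) = g i := fun i hi => Function.invFun_eq (hrange i hi)
  refine ⟨fun i => e.invFun (g i), (isDirWalk_preimage he).2 ⟨?_, ?_, fun i hi => ?_⟩, hlift⟩
  · exact (hlift 0 k.zero_le).trans hg.1
  · exact (hlift k le_rfl).trans hg.2.1
  · simpa only [Function.comp_apply, hlift i hi.le, hlift (i + 1) hi] using hg.2.2 i hi

theorem hasDirWalk_preimage (he : e.Injective) (hA : ∀ p q, A p q → q ∈ range e) :
    HasDirWalk (e ⁻¹'o A) k u v ↔ HasDirWalk A k (e u) (e v) := by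
  constructor
  · rintro ⟨f, hf⟩
    exact ⟨_, (isDirWalk_preimage he).1 hf⟩
  · rintro ⟨g, hg⟩
    obtain ⟨f, hf, -⟩ := hg.exists_lift hA he
    exact ⟨f, hf⟩

theorem dConvex_preimage (he : e.Injective) (hA : ∀ p q, A p q → q ∈ range e) {S : Set V} :
    DConvex (e ⁻¹'o A) S ↔ DConvex A (e '' S) := by
  refine and_congr image_nonempty.symm ⟨?_, ?_⟩
  · rintro h _ ⟨u, hu, rfl⟩ _ ⟨v, hv, rfl⟩ k g ⟨hg, hmin⟩ i hi
    obtain ⟨f, hf, hfg⟩ := hg.exists_lift hA he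
    have hgeo : IsGeodesic (e ⁻¹'o A) k f u v :=
      ⟨hf, fun l f' hf' => hmin l _ ((isDirWalk_preimage he).1 hf')⟩
    exact ⟨f i, h u hu v hv k f hgeo i hi, hfg i hi⟩
  · rintro h u hu v hv k f ⟨hf, hmin⟩ i hi
    have hgeo : IsGeodesic A k (e ∘ f) (e u) (e v) := by
      refine ⟨(isDirWalk_preimage he).1 hf, fun l g hg => ?_⟩
      obtain ⟨f', hf'⟩ := (hasDirWalk_preimage he hA).2 ⟨g, hg⟩
      exact hmin l f' hf'
    exact he.mem_set_image.1
      (h _ (mem_image_of_mem e hu) _ (mem_image_of_mem e hv) k _ hgeo i hi)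

end Preimage

section Cells

variable {A : ℤ × ℤ → ℤ × ℤ → Prop} {S : Set (ℤ × ℤ)} {a b c d i k : ℤ} {p q : ℤ × ℤ}

/-- The graph distance of the infinite grid `ℤ × ℤ`, valued in `ℕ` for comparison with lengths of
walks. Two points are neighbours in the grid iff it equals `1`. -/
def gridDist (p q : ℤ × ℤ) : ℕ := (p.1 - q.1).natAbs + (p.2 - q.2).natAbs

theorem HasDirWalk.gridDist_le (hA : ∀ p q, A p q → gridDist p q = 1) {l : ℕ}
    (h : HasDirWalk A l p q) : gridDist p q ≤ l := by
  induction l generalizing p with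
  | zero => simp [gridDist, hasDirWalk_zero.1 h]
  | succ l ih =>
    obtain ⟨r, hpr, hrq⟩ := h.exists_cons
    have hr := ih hrq
    have hpr' := hA p r hpr
    unfold gridDist at *
    omega

/-- The corners of the unit square whose corner with the smallest coordinates is `(i, k)`. -/
def cell (i k : ℤ) : Set (ℤ × ℤ) := Icc i (i + 1) ×ˢ Icc k (k + 1)

theorem mem_cell : p ∈ cell i k ↔ (i ≤ p.1 ∧ p.1 ≤ i + 1) ∧ k ≤ p.2 ∧ p.2 ≤ k + 1 :=
  Iff.rfl

/-- The boundary of the cell at `(i, k)` is a directed `4`-cycle, in one of its two senses. -/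
def CyclicCell (A : ℤ × ℤ → ℤ × ℤ → Prop) (i k : ℤ) : Prop :=
  A (i, k) (i, k + 1) ∧ A (i, k + 1) (i + 1, k + 1) ∧ A (i + 1, k + 1) (i + 1, k) ∧
      A (i + 1, k) (i, k) ∨
    A (i, k) (i + 1, k) ∧ A (i + 1, k) (i + 1, k + 1) ∧ A (i + 1, k + 1) (i, k + 1) ∧
      A (i, k + 1) (i, k)

theorem IsCellClosed.cell_subset (hS : IsCellClosed A S) (hcell : CyclicCell A i k)
    (hp : p ∈ S) (hq : q ∈ S) (hpc : p ∈ cell i k) (hqc : q ∈ cell i k)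
    (hpq : gridDist p q = 1) : cell i k ⊆ S := by
  have hcorner : ∀ r : ℤ × ℤ, r ∈ cell i k →
      r = (i, k) ∨ r = (i, k + 1) ∨ r = (i + 1, k) ∨ r = (i + 1, k + 1) := by
    rintro ⟨x, y⟩ h
    simp only [mem_cell] at h
    simp only [Prod.mk.injEq]
    omega
  have hcorners : (i, k) ∈ S ∧ (i, k + 1) ∈ S ∧ (i + 1, k) ∈ S ∧ (i + 1, k + 1) ∈ S := by
    rcases hcell with ⟨h₁, h₂, h₃, h₄⟩ | ⟨h₁, h₂, h₃, h₄⟩ <;>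
    · have h₁₂ := hS.mem_of_cycle h₁ h₂ h₃ h₄
      have h₂₃ := hS.mem_of_cycle h₂ h₃ h₄ h₁
      have h₃₄ := hS.mem_of_cycle h₃ h₄ h₁ h₂
      have h₄₁ := hS.mem_of_cycle h₄ h₁ h₂ h₃
      rcases hcorner p hpc with rfl | rfl | rfl | rfl <;>
        rcases hcorner q hqc with rfl | rfl | rfl | rfl <;>
        simp only [gridDist] at hpq <;> first | omega | tauto
  intro r hr
  rcases hcorner r hr with rfl | rfl | rfl | rfl <;> tauto

theorem iff_of_iff_succ {P : ℤ → Prop} (h : ∀ i, a ≤ i → i < b → (P i ↔ P (i + 1)))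
    (hi : i ∈ Icc a b) (hk : k ∈ Icc a b) : P i ↔ P k := by
  have hbase : ∀ i, a ≤ i → i ≤ b → (P a ↔ P i) := by
    intro i hi
    induction i, hi using Int.leInduction with
    | base => exact fun _ => Iff.rfl
    | succ i hi ih => exact fun hib => (ih (by omega)).trans (h i hi (by omega))
  exact (hbase i hi.1 hi.2).symm.trans (hbase k hk.1 hk.2)

theorem IsCellClosed.cell_subset_iff_succ_left (hS : IsCellClosed A S) (h : CyclicCell A i k)
    (h' : CyclicCell A (i + 1) k) : cell i k ⊆ S ↔ cell (i + 1) k ⊆ S := by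
  have hmem {r : ℤ × ℤ} (hr : r ∈ ({(i + 1, k), (i + 1, k + 1)} : Set (ℤ × ℤ))) :
      r ∈ cell i k ∧ r ∈ cell (i + 1) k := by
    rcases hr with rfl | rfl <;> simp [mem_cell]
  have hp := hmem (.inl rfl)
  have hq := hmem (.inr rfl)
  have hpq : gridDist (i + 1, k) (i + 1, k + 1) = 1 := by simp [gridDist]
  exact ⟨fun hc => hS.cell_subset h' (hc hp.1) (hc hq.1) hp.2 hq.2 hpq,
    fun hc => hS.cell_subset h (hc hp.2) (hc hq.2) hp.1 hq.1 hpq⟩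

theorem IsCellClosed.cell_subset_iff_succ_right (hS : IsCellClosed A S) (h : CyclicCell A i k)
    (h' : CyclicCell A i (k + 1)) : cell i k ⊆ S ↔ cell i (k + 1) ⊆ S := by
  have hmem {r : ℤ × ℤ} (hr : r ∈ ({(i, k + 1), (i + 1, k + 1)} : Set (ℤ × ℤ))) :
      r ∈ cell i k ∧ r ∈ cell i (k + 1) := by
    rcases hr with rfl | rfl <;> simp [mem_cell]
  have hp := hmem (.inl rfl)
  have hq := hmem (.inr rfl)
  have hpq : gridDist (i, k + 1) (i + 1, k + 1) = 1 := by simp [gridDist]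
  exact ⟨fun hc => hS.cell_subset h' (hc hp.1) (hc hq.1) hp.2 hq.2 hpq,
    fun hc => hS.cell_subset h (hc hp.2) (hc hq.2) hp.1 hq.1 hpq⟩

theorem IsCellClosed.rectangle_subset (hS : IsCellClosed A S) (hab : a < b) (hcd : c < d)
    (hcell : ∀ i ∈ Ico a b, ∀ k ∈ Ico c d, CyclicCell A i k)
    (hp : p ∈ S) (hq : q ∈ S) (hpR : p ∈ Icc a b ×ˢ Icc c d) (hqR : q ∈ Icc a b ×ˢ Icc c d)
    (hpq : gridDist p q = 1) : Icc a b ×ˢ Icc c d ⊆ S := by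
  have hiff : ∀ i ∈ Icc a (b - 1), ∀ k ∈ Icc c (d - 1), ∀ i' ∈ Icc a (b - 1),
      ∀ k' ∈ Icc c (d - 1), (cell i k ⊆ S ↔ cell i' k' ⊆ S) := by
    intro i hi k hk i' hi' k' hk'
    simp only [mem_Icc, mem_Ico] at *
    calc cell i k ⊆ S ↔ cell i' k ⊆ S :=
          iff_of_iff_succ (P := fun i => cell i k ⊆ S) (fun i _ _ => hS.cell_subset_iff_succ_left
            (hcell i (by omega) k (by omega)) (hcell (i + 1) (by omega) k (by omega))) hi hi'
      _ ↔ cell i' k' ⊆ S :=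
          iff_of_iff_succ (P := fun k => cell i' k ⊆ S) (fun k _ _ => hS.cell_subset_iff_succ_right
            (hcell i' (by omega) k (by omega)) (hcell i' (by omega) (k + 1) (by omega))) hk hk'
  simp only [mem_prod, mem_Icc, mem_Ico, gridDist] at *
  have hstart : cell (min (min p.1 q.1) (b - 1)) (min (min p.2 q.2) (d - 1)) ⊆ S :=
    hS.cell_subset (hcell _ (by omega) _ (by omega)) hp hq (mem_cell.2 (by omega))
      (mem_cell.2 (by omega)) hpq
  intro r hr
  simp only [mem_prod, mem_Icc] at hr
  exact (hiff _ (by omega) _ (by omega) (min r.1 (b - 1)) (by omega) (min r.2 (d - 1))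
    (by omega)).1 hstart (mem_cell.2 (by omega))

end Cells

section Strip

/-- Three columns `0, 1, 2` and the rows `lo, …, hi` of `ℤ × ℤ`; the first coordinate is the row. -/
def Strip (lo hi : ℤ) : Set (ℤ × ℤ) := Icc lo hi ×ˢ Icc 0 2

/-- The horizontal edge between `(i, c)` and `(i, c + 1)` is directed to the right. -/
def RightAt (i c : ℤ) : Prop :=
  i < 0 ∧ (i + c) % 2 = 0 ∨ 0 ≤ i ∧ i ≠ 1 ∧ (i + c) % 2 = 1

/-- The vertical edge between `(i, c)` and `(i + 1, c)` is directed towards `(i + 1, c)`. -/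
def DownAt (i c : ℤ) : Prop :=
  i ≤ -3 ∧ (i + c) % 2 = 1 ∨ -2 ≤ i ∧ i ≤ -1 ∧ 1 ≤ c ∨ i = 0 ∧ c = 2 ∨ 1 ≤ i ∧ (i + c) % 2 = 0

/-- The orientation of the grid on `Strip lo hi`. In the rows `≤ -2` and in the rows `≥ 2` every
unit square is a directed `4`-cycle; in between the arcs are
```
  row -2   • → • ← •
           ↑   ↓   ↓
  row -1   • ← • → •
           ↑   ↓   ↓
  row  0   • ← • → •
           ↑   ↑   ↓
  row  1   • ← • ← •
           ↑   ↓   ↑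
  row  2   • ← • → •
```
-/
def StripArc (lo hi : ℤ) (p q : ℤ × ℤ) : Prop :=
  p ∈ Strip lo hi ∧ q ∈ Strip lo hi ∧
    (q.1 = p.1 ∧ q.2 = p.2 + 1 ∧ RightAt p.1 p.2 ∨ p.1 = q.1 ∧ p.2 = q.2 + 1 ∧ ¬ RightAt q.1 q.2 ∨
      q.2 = p.2 ∧ q.1 = p.1 + 1 ∧ DownAt p.1 p.2 ∨ p.2 = q.2 ∧ p.1 = q.1 + 1 ∧ ¬ DownAt q.1 q.2)

variable {lo hi : ℤ} {S : Set (ℤ × ℤ)} {p q : ℤ × ℤ}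

theorem mem_strip : p ∈ Strip lo hi ↔ (lo ≤ p.1 ∧ p.1 ≤ hi) ∧ 0 ≤ p.2 ∧ p.2 ≤ 2 :=
  Iff.rfl

theorem finite_strip (lo hi : ℤ) : (Strip lo hi).Finite :=
  (finite_Icc _ _).prod (finite_Icc _ _)

theorem ncard_Icc_int (a b : ℤ) : (Icc a b).ncard = (b + 1 - a).toNat := by
  rw [ncard_eq_toFinset_card', toFinset_Icc, Int.card_Icc]

theorem ncard_strip (lo hi : ℤ) : (Strip lo hi).ncard = (hi + 1 - lo).toNat * 3 := by
  rw [Strip, ncard_prod, ncard_Icc_int, ncard_Icc_int]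
  rfl

theorem stripArc_iff : StripArc lo hi p q ↔
    ((lo ≤ p.1 ∧ p.1 ≤ hi) ∧ 0 ≤ p.2 ∧ p.2 ≤ 2) ∧ ((lo ≤ q.1 ∧ q.1 ≤ hi) ∧ 0 ≤ q.2 ∧ q.2 ≤ 2) ∧
      (q.1 = p.1 ∧ q.2 = p.2 + 1 ∧
          (p.1 < 0 ∧ (p.1 + p.2) % 2 = 0 ∨ 0 ≤ p.1 ∧ p.1 ≠ 1 ∧ (p.1 + p.2) % 2 = 1) ∨
        p.1 = q.1 ∧ p.2 = q.2 + 1 ∧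
          ¬ (q.1 < 0 ∧ (q.1 + q.2) % 2 = 0 ∨ 0 ≤ q.1 ∧ q.1 ≠ 1 ∧ (q.1 + q.2) % 2 = 1) ∨
        q.2 = p.2 ∧ q.1 = p.1 + 1 ∧
          (p.1 ≤ -3 ∧ (p.1 + p.2) % 2 = 1 ∨ -2 ≤ p.1 ∧ p.1 ≤ -1 ∧ 1 ≤ p.2 ∨
            p.1 = 0 ∧ p.2 = 2 ∨ 1 ≤ p.1 ∧ (p.1 + p.2) % 2 = 0) ∨
        p.2 = q.2 ∧ p.1 = q.1 + 1 ∧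
          ¬ (q.1 ≤ -3 ∧ (q.1 + q.2) % 2 = 1 ∨ -2 ≤ q.1 ∧ q.1 ≤ -1 ∧ 1 ≤ q.2 ∨
            q.1 = 0 ∧ q.2 = 2 ∨ 1 ≤ q.1 ∧ (q.1 + q.2) % 2 = 0)) :=
  Iff.rfl

theorem StripArc.gridDist_eq_one (h : StripArc lo hi p q) : gridDist p q = 1 := by
  unfold gridDist
  rcases h with ⟨-, -, ⟨h, h', -⟩ | ⟨h, h', -⟩ | ⟨h, h', -⟩ | ⟨h, h', -⟩⟩ <;> omega

theorem StripArc.not_symm (h : StripArc lo hi p q) : ¬ StripArc lo hi q p := by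
  grind [StripArc]

theorem stripArc_or_stripArc (hp : p ∈ Strip lo hi) (hq : q ∈ Strip lo hi)
    (hpq : gridDist p q = 1) : StripArc lo hi p q ∨ StripArc lo hi q p := by
  have hcases : p.1 = q.1 ∧ (q.2 = p.2 + 1 ∨ p.2 = q.2 + 1) ∨
      p.2 = q.2 ∧ (q.1 = p.1 + 1 ∨ p.1 = q.1 + 1) := by
    unfold gridDist at hpq
    omega
  grind [StripArc]

theorem StripArc.mem_evenSum_iff (h : StripArc lo hi p q) :
    p ∈ {p : ℤ × ℤ | (p.1 + p.2) % 2 = 0} ↔ q ∉ {p : ℤ × ℤ | (p.1 + p.2) % 2 = 0} := by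
  rw [stripArc_iff] at h
  rw [mem_ofPred_eq, mem_ofPred_eq]
  omega

theorem DConvex.isCellClosed_stripArc (hS : DConvex (StripArc lo hi) S) :
    IsCellClosed (StripArc lo hi) S :=
  hS.isCellClosed (fun _ _ h => h.not_symm) fun _ _ h => h.mem_evenSum_iff

theorem cyclicCell_stripArc_of_iff {i k : ℤ} (hcell : cell i k ⊆ Strip lo hi)
    (hright : DownAt i (k + 1) ↔ RightAt i k) (hbottom : RightAt (i + 1) k ↔ ¬ RightAt i k)
    (hleft : DownAt i k ↔ ¬ RightAt i k) : CyclicCell (StripArc lo hi) i k := by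
  have h₀₀ : (i, k) ∈ Strip lo hi := hcell (by simp [mem_cell])
  have h₀₁ : (i, k + 1) ∈ Strip lo hi := hcell (by simp [mem_cell])
  have h₁₀ : (i + 1, k) ∈ Strip lo hi := hcell (by simp [mem_cell])
  have h₁₁ : (i + 1, k + 1) ∈ Strip lo hi := hcell (by simp [mem_cell])
  grind [CyclicCell, StripArc]

theorem cyclicCell_stripArc {i k : ℤ} (hlo : lo ≤ i) (hhi : i < hi)
    (hrow : i ≤ -3 ∨ 2 ≤ i) (hk : k ∈ Ico 0 2) : CyclicCell (StripArc lo hi) i k := by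
  rw [mem_Ico] at hk
  refine cyclicCell_stripArc_of_iff (fun p hp => ?_) ?_ ?_ ?_
  · rw [mem_cell] at hp
    rw [mem_strip]
    omega
  all_goals
    unfold RightAt
    try unfold DownAt
    omega

theorem cyclicCell_stripArc_one_one (hlo : lo ≤ 1) (hhi : 2 ≤ hi) :
    CyclicCell (StripArc lo hi) 1 1 := by
  refine .inr ⟨?_, ?_, ?_, ?_⟩ <;> exact stripArc_iff.2 (by omega)

/-- The closed walk
`(0,1) (0,0) (-1,0) (-2,0) (-2,1) (-1,1) (0,1) (0,2) (1,2) (1,1) (0,1)`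
of length `10`, a figure eight crossing at `(0, 1)`. -/
def coreWalk : ℕ → ℤ × ℤ
  | 1 => (0, 0)
  | 2 => (-1, 0)
  | 3 => (-2, 0)
  | 4 => (-2, 1)
  | 5 => (-1, 1)
  | 7 => (0, 2)
  | 8 => (1, 2)
  | 9 => (1, 1)
  | _ => (0, 1)

theorem isDirWalk_coreWalk (hlo : lo ≤ -2) (hhi : 1 ≤ hi) :
    IsDirWalk (StripArc lo hi) 10 coreWalk (0, 1) (0, 1) := by
  refine ⟨rfl, rfl, fun i hi => ?_⟩
  interval_cases i <;> grind [coreWalk, stripArc_iff]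

theorem IsCellClosed.strip_subset_of_arc (hS : IsCellClosed (StripArc lo hi) S) {a b : ℤ}
    (hab : a < b) (hlo : lo ≤ a) (hhi : b ≤ hi) (hrows : b ≤ -2 ∨ 2 ≤ a) (hp : p ∈ S) (hq : q ∈ S)
    (hpR : p ∈ Strip a b) (hqR : q ∈ Strip a b) (hpq : gridDist p q = 1) : Strip a b ⊆ S := by
  refine hS.rectangle_subset hab (by omega) (fun i hi' k hk => ?_) hp hq hpR hqR hpq
  rw [mem_Ico] at hi'
  exact cyclicCell_stripArc (by omega) (by omega) (by omega) hk

theorem IsCellClosed.mem_row_two (hS : IsCellClosed (StripArc lo hi) S) (hlo : lo ≤ 1)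
    (hhi : 2 ≤ hi) (h11 : (1, 1) ∈ S) (h12 : (1, 2) ∈ S) : (2, 1) ∈ S ∧ (2, 2) ∈ S := by
  have hcell := hS.cell_subset (cyclicCell_stripArc_one_one hlo hhi) h11 h12
    (by simp [mem_cell]) (by simp [mem_cell]) rfl
  exact ⟨hcell (by simp [mem_cell]), hcell (by simp [mem_cell])⟩

theorem IsCellClosed.strip_two_subset (hS : IsCellClosed (StripArc lo hi) S) (hlo : lo ≤ 1)
    (h10 : (1, 0) ∈ S) (h11 : (1, 1) ∈ S) (h12 : (1, 2) ∈ S) : Strip 2 hi ⊆ S := by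
  rcases lt_or_ge hi 2 with hhi | hhi
  · simp [Strip, Icc_eq_empty_of_lt hhi]
  obtain ⟨h21, h22⟩ := hS.mem_row_two hlo hhi h11 h12
  rcases eq_or_lt_of_le hhi with rfl | hhi'
  · have h20 : (2, 0) ∈ S :=
      hS.mem_of_path (x := (2, 1)) (y := (1, 0)) (stripArc_iff.2 (by omega))
        (stripArc_iff.2 (by omega)) (by simp) h21 h10
    rintro ⟨i, k⟩ hp
    rw [mem_strip] at hp
    obtain rfl : i = 2 := by omega
    obtain rfl | rfl | rfl : k = 0 ∨ k = 1 ∨ k = 2 := by omega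
    all_goals assumption
  · exact hS.strip_subset_of_arc hhi' (by omega) le_rfl (.inr le_rfl) h21 h22
      (mem_strip.2 (by omega)) (mem_strip.2 (by omega)) rfl

theorem IsCellClosed.strip_subset_of_coreWalk_mem (hS : IsCellClosed (StripArc lo hi) S)
    (hlo : lo ≤ -3) (hhi : 1 ≤ hi) (hcore : ∀ l ≤ 10, coreWalk l ∈ S) : Strip lo hi ⊆ S := by
  have h11 : (1, 1) ∈ S := hcore 9 (by omega)
  have hupper : Strip lo (-2) ⊆ S :=
    hS.strip_subset_of_arc (p := (-2, 0)) (q := (-2, 1)) (by omega) le_rfl (by omega) (.inl le_rfl)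
      (hcore 3 (by omega)) (hcore 4 (by omega)) (mem_strip.2 (by omega)) (mem_strip.2 (by omega))
      rfl
  have hright : (-1, 2) ∈ S :=
    hS.mem_of_path (x := (-2, 2)) (y := (0, 2)) (stripArc_iff.2 (by omega))
      (stripArc_iff.2 (by omega)) (by simp) (hupper (mem_strip.2 (by omega))) (hcore 7 (by omega))
  have hleft : (1, 0) ∈ S :=
    hS.mem_of_path (x := (1, 1)) (y := (0, 0)) (stripArc_iff.2 (by omega))
      (stripArc_iff.2 (by omega)) (by simp) h11 (hcore 1 (by omega))
  have hlower : Strip 2 hi ⊆ S := hS.strip_two_subset (by omega) hleft h11 (hcore 8 (by omega))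
  rintro ⟨i, k⟩ hp
  rw [mem_strip] at hp
  rcases lt_or_ge i (-1) with hi₁ | hi₁
  · exact hupper (mem_strip.2 (by omega))
  rcases lt_or_ge 1 i with hi₂ | hi₂
  · exact hlower (mem_strip.2 (by omega))
  obtain ⟨-, hk₁, hk₂⟩ := hp
  interval_cases i <;> interval_cases k
  exacts [hcore 2 (by omega), hcore 5 (by omega), hright, hcore 1 (by omega), hcore 0 (by omega),
    hcore 7 (by omega), hleft, h11, hcore 8 (by omega)]

theorem dirReachable_stripArc (hlo : lo ≤ -3) (hhi : 1 ≤ hi) (hp : p ∈ Strip lo hi)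
    (hq : q ∈ Strip lo hi) : DirReachable (StripArc lo hi) p q := by
  have hstrip : Strip lo hi ⊆ strongComponent (StripArc lo hi) (0, 1) :=
    (isCellClosed_strongComponent _).strip_subset_of_coreWalk_mem hlo hhi
      fun _ hl => (isDirWalk_coreWalk (by omega) hhi).mem_strongComponent hl
  exact dirReachable_of_mem_strongComponent (hstrip hp) (hstrip hq)

/-- The rows `≤ -2` of the strip together with the points `(i, c)` with `-1 ≤ i ≤ 0` and
`0 ≤ c ≤ 1`; it will be the largest proper convex set of `StripArc lo hi`. -/
def Block (lo : ℤ) : Set (ℤ × ℤ) := Strip lo (-2) ∪ Icc (-1) 0 ×ˢ Icc 0 1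

theorem mem_block : p ∈ Block lo ↔ ((lo ≤ p.1 ∧ p.1 ≤ -2) ∧ 0 ≤ p.2 ∧ p.2 ≤ 2) ∨
    (-1 ≤ p.1 ∧ p.1 ≤ 0) ∧ 0 ≤ p.2 ∧ p.2 ≤ 1 :=
  Iff.rfl

theorem block_subset_strip (hlo : lo ≤ -1) (hhi : 0 ≤ hi) : Block lo ⊆ Strip lo hi := by
  intro p hp
  rw [mem_block] at hp
  rw [mem_strip]
  omega

theorem ncard_block {j : ℕ} (hj : 1 ≤ j) : (Block (-j)).ncard = 3 * j + 1 := by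
  have hdisj : Disjoint (Strip (-j) (-2)) (Icc (-1) 0 ×ˢ Icc 0 1) := by
    rw [disjoint_left]
    intro p hp hp'
    rw [mem_strip] at hp
    rw [mem_prod, mem_Icc] at hp'
    omega
  have hsquare : (Icc (-1 : ℤ) 0 ×ˢ Icc (0 : ℤ) 1).ncard = 4 := by
    rw [ncard_prod, ncard_Icc_int, ncard_Icc_int]
    rfl
  rw [Block, ncard_union_eq hdisj (finite_strip _ _) ((finite_Icc _ _).prod (finite_Icc _ _)),
    ncard_strip, hsquare]
  omega

theorem StripArc.of_mem_block_of_notMem_block (h : StripArc lo hi p q) (hp : p ∈ Block lo)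
    (hq : q ∉ Block lo) :
    p = (-2, 2) ∧ q = (-1, 2) ∨ p = (-1, 1) ∧ q = (-1, 2) ∨ p = (0, 1) ∧ q = (0, 2) := by
  rw [stripArc_iff] at h
  rw [mem_block] at hp hq
  simp only [Prod.ext_iff]
  omega

theorem StripArc.of_notMem_block_of_mem_block (h : StripArc lo hi p q) (hp : p ∉ Block lo)
    (hq : q ∈ Block lo) :
    p = (1, 1) ∧ q = (0, 1) ∨ p = (1, 0) ∧ q = (0, 0) := by
  rw [stripArc_iff] at h
  rw [mem_block] at hp hq
  simp only [Prod.ext_iff]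
  omega

theorem dConvex_block (hlo : lo ≤ -2) (hhi : 1 ≤ hi) : DConvex (StripArc lo hi) (Block lo) := by
  have hwalk₁ : HasDirWalk (StripArc lo hi) 1 (-1, 1) (0, 1) := .single (stripArc_iff.2 (by omega))
  have hwalk₃ : HasDirWalk (StripArc lo hi) 3 (-2, 2) (0, 1) :=
    .cons (v := (-2, 1)) (stripArc_iff.2 (by omega)) (.cons (stripArc_iff.2 (by omega)) hwalk₁)
  refine dConvex_of_shorter_detour ⟨(0, 1), mem_block.2 (by omega)⟩
    fun a ha b hb c hc d hd hab hcd k hk => ?_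
  have hentry := hcd.of_notMem_block_of_mem_block hc hd
  have hdetour : ∃ l ≤ gridDist b c, HasDirWalk (StripArc lo hi) l a (0, 1) := by
    rcases hab.of_mem_block_of_notMem_block ha hb with ⟨rfl, rfl⟩ | ⟨rfl, rfl⟩ | ⟨rfl, rfl⟩
    · exact ⟨3, by rcases hentry with ⟨rfl, -⟩ | ⟨rfl, -⟩ <;> simp [gridDist], hwalk₃⟩
    · exact ⟨1, by rcases hentry with ⟨rfl, -⟩ | ⟨rfl, -⟩ <;> simp [gridDist], hwalk₁⟩
    · exact ⟨0, Nat.zero_le _, hasDirWalk_zero.2 rfl⟩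
  obtain ⟨l, hl, hal⟩ := hdetour
  have hbc : gridDist b c ≤ k := hk.gridDist_le fun _ _ h => h.gridDist_eq_one
  rcases hentry with ⟨-, rfl⟩ | ⟨-, rfl⟩
  · exact ⟨l, by omega, hal⟩
  · exact ⟨l + 1, by omega, hal.trans (.single (stripArc_iff.2 (by omega)))⟩

theorem StripArc.eq_coreWalk_succ {l : ℕ} (h : StripArc lo hi (coreWalk l) q)
    (hl : 1 ≤ l ∧ l ≤ 3 ∨ 7 ≤ l ∧ l ≤ 8) : q = coreWalk (l + 1) := by
  obtain rfl | rfl | rfl | rfl | rfl : l = 1 ∨ l = 2 ∨ l = 3 ∨ l = 7 ∨ l = 8 := by omega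
  all_goals
    rw [stripArc_iff] at h
    simp only [coreWalk, Prod.ext_iff] at h ⊢
    omega

section ConvexSubset

variable (hS : DConvex (StripArc lo hi) S)
  (hreach : ∀ u ∈ S, ∀ v ∈ S, DirReachable (StripArc lo hi) u v) (hnt : S.Nontrivial)

include hS hreach hnt

theorem DConvex.coreWalk_succ_mem {l : ℕ} (hl : 1 ≤ l ∧ l ≤ 3 ∨ 7 ≤ l ∧ l ≤ 8)
    (h : coreWalk l ∈ S) : coreWalk (l + 1) ∈ S :=
  hS.mem_of_forall_out_arc_eq hreach hnt h fun _ hw => hw.eq_coreWalk_succ hl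

theorem DConvex.ring_mem (hlo : lo ≤ 0) (hhi : 1 ≤ hi) (h11 : (1, 1) ∈ S) :
    (1, 2) ∈ S ∧ (0, 1) ∈ S ∧ (0, 2) ∈ S := by
  have h12 : (1, 2) ∈ S := hS.mem_of_forall_in_arc_eq hreach hnt h11 fun w hw => by
    rw [stripArc_iff] at hw
    rw [Prod.ext_iff]
    omega
  obtain ⟨h01, h02⟩ := hS.isCellClosed_stripArc.mem_of_cycle (w := (1, 2)) (x := (1, 1))
    (y := (0, 1)) (z := (0, 2)) (stripArc_iff.2 (by omega)) (stripArc_iff.2 (by omega))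
    (stripArc_iff.2 (by omega)) (stripArc_iff.2 (by omega)) h12 h11
  exact ⟨h12, h01, h02⟩

theorem DConvex.one_one_mem_of_two_le (hlo : lo ≤ 1) (hp : p ∈ S) (hp2 : 2 ≤ p.1) :
    (1, 1) ∈ S := by
  have hin : ∀ p ∈ S, 2 ≤ p.1 → (1, 1) ∈ S ∨ ∃ q ∈ S, StripArc lo hi q p ∧ 2 ≤ q.1 := by
    intro p hp hp2
    obtain ⟨q, hq, hqp⟩ := hS.exists_in_arc hreach hnt hp
    have hq2 : q = (1, 1) ∨ 2 ≤ q.1 := by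
      rw [stripArc_iff] at hqp
      rw [Prod.ext_iff]
      omega
    rcases hq2 with rfl | hq2
    exacts [.inl hq, .inr ⟨q, hq, hqp, hq2⟩]
  obtain h11 | ⟨q, hq, hqp, hq2⟩ := hin p hp hp2
  · exact h11
  obtain ⟨hpS, hqS, -⟩ := id hqp
  rw [mem_strip] at hpS hqS
  rcases lt_or_ge 2 hi with hhi | hhi
  · have hlower : Strip 2 hi ⊆ S :=
      hS.isCellClosed_stripArc.strip_subset_of_arc hhi (by omega) le_rfl (.inr le_rfl) hq hp
        (mem_strip.2 (by omega)) (mem_strip.2 (by omega)) hqp.gridDist_eq_one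
    exact hS.isCellClosed_stripArc.cell_subset (p := (2, 1)) (q := (2, 2))
      (cyclicCell_stripArc_one_one hlo hhi.le) (hlower (mem_strip.2 (by omega)))
      (hlower (mem_strip.2 (by omega))) (by simp [mem_cell]) (by simp [mem_cell]) rfl
      (by simp [mem_cell])
  · obtain h11 | ⟨r, -, hrq, hr2⟩ := hin q hq hq2
    · exact h11
    · rw [stripArc_iff] at hqp hrq
      omega

theorem DConvex.one_one_mem (hlo : lo ≤ 1) (hp : p ∈ S) (hpB : p ∉ Block lo) : (1, 1) ∈ S := by
  have h02 (h : (0, 2) ∈ S) : (1, 1) ∈ S :=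
    hS.coreWalk_succ_mem hreach hnt (l := 8) (by omega)
      (hS.coreWalk_succ_mem hreach hnt (l := 7) (by omega) h)
  have hin (h : (1, 0) ∈ S) : (1, 1) ∈ S := by
    obtain ⟨q, hq, hqp⟩ := hS.exists_in_arc hreach hnt h
    have hq' : q = (1, 1) ∨ 2 ≤ q.1 := by
      rw [stripArc_iff] at hqp
      rw [Prod.ext_iff]
      omega
    rcases hq' with rfl | hq2
    exacts [hq, hS.one_one_mem_of_two_le hreach hnt hlo hq hq2]
  obtain ⟨_, -, hqp⟩ := hS.exists_in_arc hreach hnt hp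
  have hcases : p = (-1, 2) ∨ p = (0, 2) ∨ p = (1, 0) ∨ p = (1, 1) ∨ p = (1, 2) ∨ 2 ≤ p.1 := by
    have := mem_strip.1 hqp.2.1
    rw [mem_block] at hpB
    simp only [Prod.ext_iff]
    omega
  rcases hcases with rfl | rfl | rfl | rfl | rfl | hp2
  · refine h02 (hS.mem_of_forall_out_arc_eq hreach hnt hp fun w hw => ?_)
    rw [stripArc_iff] at hw
    rw [Prod.ext_iff]
    omega
  · exact h02 hp
  · exact hin hp
  · exact hp
  · exact hS.coreWalk_succ_mem hreach hnt (l := 8) (by omega) hp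
  · exact hS.one_one_mem_of_two_le hreach hnt hlo hp hp2

theorem DConvex.strip_subset_of_zero_zero_mem (hlo : lo ≤ -3) (hhi : 1 ≤ hi) (h00 : (0, 0) ∈ S)
    (h11 : (1, 1) ∈ S) : Strip lo hi ⊆ S := by
  obtain ⟨h12, h01, h02⟩ := hS.ring_mem hreach hnt (by omega) hhi h11
  have h₂ : coreWalk 2 ∈ S := hS.coreWalk_succ_mem hreach hnt (l := 1) (by omega) h00
  have h₃ : coreWalk 3 ∈ S := hS.coreWalk_succ_mem hreach hnt (by omega) h₂
  have h₄ : coreWalk 4 ∈ S := hS.coreWalk_succ_mem hreach hnt (by omega) h₃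
  have h₅ : coreWalk 5 ∈ S := hS.isCellClosed_stripArc.mem_of_path (x := (-2, 1)) (y := (0, 1))
    (z := (-1, 1)) (stripArc_iff.2 (by omega)) (stripArc_iff.2 (by omega))
    (by simp) h₄ h01
  refine hS.isCellClosed_stripArc.strip_subset_of_coreWalk_mem hlo hhi fun l hl => ?_
  interval_cases l
  exacts [h01, h00, h₂, h₃, h₄, h₅, h01, h02, h12, h11, h01]

end ConvexSubset

theorem HasDirWalk.five_le_of_zero_zero {l : ℕ}
    (h : HasDirWalk (StripArc lo hi) l (0, 0) (0, 1)) : 5 ≤ l := by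
  obtain ⟨l₁, rfl, h₁⟩ := h.exists_of_forall_out_arc_eq (by simp)
    fun x hx => StripArc.eq_coreWalk_succ (l := 1) hx (by omega)
  obtain ⟨l₂, rfl, h₂⟩ := h₁.exists_of_forall_out_arc_eq (by simp [coreWalk])
    fun x hx => StripArc.eq_coreWalk_succ (l := 2) hx (by omega)
  obtain ⟨l₃, rfl, h₃⟩ := h₂.exists_of_forall_out_arc_eq (by simp [coreWalk])
    fun x hx => StripArc.eq_coreWalk_succ (l := 3) hx (by omega)
  have hdist : 2 ≤ l₃ := h₃.gridDist_le fun _ _ h => h.gridDist_eq_one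
  omega

theorem HasDirWalk.six_le_of_three_zero {l : ℕ}
    (h : HasDirWalk (StripArc lo hi) l (3, 0) (0, 1)) : 6 ≤ l := by
  cases l with
  | zero => simp [hasDirWalk_zero] at h
  | succ l =>
    obtain ⟨p, hwalk, hp⟩ := h.exists_snoc
    have hp' : p = (-1, 1) ∨ p = (1, 1) := by
      rw [stripArc_iff] at hp
      simp only [Prod.ext_iff]
      omega
    rcases hp' with rfl | rfl
    · have hdist : 5 ≤ l := hwalk.gridDist_le fun _ _ h => h.gridDist_eq_one
      omega
    cases l with
    | zero => simp [hasDirWalk_zero] at hwalk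
    | succ l =>
      obtain ⟨q, hwalk', hq⟩ := hwalk.exists_snoc
      obtain rfl : q = (1, 2) := by
        rw [stripArc_iff] at hq
        rw [Prod.ext_iff]
        omega
      have hdist : 4 ≤ l := hwalk'.gridDist_le fun _ _ h => h.gridDist_eq_one
      omega

theorem HasDirWalk.seven_le_of_two_zero {l : ℕ}
    (h : HasDirWalk (StripArc lo hi) l (2, 0) (0, 1)) : 7 ≤ l := by
  cases l with
  | zero => simp [hasDirWalk_zero] at h
  | succ l =>
    obtain ⟨p, hp, hwalk⟩ := h.exists_cons
    have hp' : p = (1, 0) ∨ p = (3, 0) := by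
      rw [stripArc_iff] at hp
      simp only [Prod.ext_iff]
      omega
    rcases hp' with rfl | rfl
    · obtain ⟨m, rfl, hwalk'⟩ := hwalk.exists_of_forall_out_arc_eq (v := (0, 0)) (by simp)
        fun q hq => by
          rw [stripArc_iff] at hq
          rw [Prod.ext_iff]
          omega
      have := hwalk'.five_le_of_zero_zero
      omega
    · have := hwalk.six_le_of_three_zero
      omega

theorem DConvex.subset_insert_compl_block (hS : DConvex (StripArc lo hi) S)
    (hreach : ∀ u ∈ S, ∀ v ∈ S, DirReachable (StripArc lo hi) u v) (h00 : (0, 0) ∉ S)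
    (h01 : (0, 1) ∈ S) : S ⊆ insert (0, 1) (Block lo)ᶜ := by
  by_contra hsub
  obtain ⟨v, hv, hvT⟩ := not_subset.1 hsub
  obtain ⟨a, ⟨-, haT⟩, b, ⟨hb, hbT⟩, hab⟩ :=
    hS.exists_arc_leaving (hreach _ h01 v hv) h01 hv (mem_insert _ _) hvT
  rw [mem_insert_iff, mem_compl_iff, not_or, not_not] at hbT
  obtain ⟨hbt, hbB⟩ := hbT
  have hb00 : b = (0, 0) := by
    rcases haT with rfl | haB
    · rw [stripArc_iff] at hab
      rw [mem_block] at hbB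
      rw [Prod.ext_iff]
      omega
    · rcases hab.of_notMem_block_of_mem_block haB hbB with ⟨-, rfl⟩ | ⟨-, rfl⟩
      exacts [absurd rfl hbt, rfl]
  exact h00 (hb00 ▸ hb)

section ConvexSubset

variable (hS : DConvex (StripArc lo hi) S)
  (hreach : ∀ u ∈ S, ∀ v ∈ S, DirReachable (StripArc lo hi) u v) (hnt : S.Nontrivial)

include hS hreach hnt

theorem DConvex.zero_zero_mem_of_three_le (hlo : lo ≤ -2) (hhi : 3 ≤ hi) (h11 : (1, 1) ∈ S) :
    (0, 0) ∈ S := by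
  obtain ⟨h12, h01, -⟩ := hS.ring_mem hreach hnt (by omega) (by omega) h11
  obtain ⟨h21, h22⟩ := hS.isCellClosed_stripArc.mem_row_two (by omega) (by omega) h11 h12
  have h20 : (2, 0) ∈ S := hS.isCellClosed_stripArc.strip_subset_of_arc (by omega) (by omega)
    le_rfl (.inr le_rfl) h21 h22 (mem_strip.2 (by omega)) (mem_strip.2 (by omega)) rfl
    (mem_strip.2 (by omega))
  have hwalk : HasDirWalk (StripArc lo hi) 6 (1, 0) (0, 1) :=
    .cons (v := (0, 0)) (stripArc_iff.2 (by omega)) <|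
    .cons (v := (-1, 0)) (stripArc_iff.2 (by omega)) <|
    .cons (v := (-2, 0)) (stripArc_iff.2 (by omega)) <|
    .cons (v := (-2, 1)) (stripArc_iff.2 (by omega)) <|
    .cons (v := (-1, 1)) (stripArc_iff.2 (by omega)) <| .single (stripArc_iff.2 (by omega))
  have h10 : (1, 0) ∈ S := hS.mem_of_adj h20 h01 (stripArc_iff.2 (by omega)) hwalk
    fun l hl => hl.seven_le_of_two_zero
  refine hS.mem_of_forall_out_arc_eq hreach hnt h10 fun w hw => ?_
  rw [stripArc_iff] at hw
  rw [Prod.ext_iff]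
  omega

theorem DConvex.zero_zero_mem_of_le_two (hhi : hi ≤ 2) (hcard : 9 < S.ncard) (h01 : (0, 1) ∈ S) :
    (0, 0) ∈ S := by
  by_contra h00
  have hsub : S ⊆ insert (0, 1) (insert (-1, 2) (insert (0, 2) (Strip 1 2))) := by
    intro p hp
    obtain ⟨q, -, hpq⟩ := hS.exists_out_arc hreach hnt hp
    have hpS := mem_strip.1 hpq.1
    rcases hS.subset_insert_compl_block hreach h00 h01 hp with rfl | hpB
    · exact mem_insert _ _
    · simp only [mem_compl_iff, mem_block, mem_insert_iff, mem_strip, Prod.ext_iff] at *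
      omega
  have hStrip : (Strip 1 2).ncard = 6 := ncard_strip 1 2
  have := ncard_le_ncard hsub ((((finite_strip 1 2).insert _).insert _).insert _)
  have := ncard_insert_le (0, 1) (insert (-1, 2) (insert (0, 2) (Strip 1 2)))
  have := ncard_insert_le (-1, 2) (insert (0, 2) (Strip 1 2))
  have := ncard_insert_le (0, 2) (Strip 1 2)
  omega

end ConvexSubset

theorem DConvex.strip_subset (hS : DConvex (StripArc lo hi) S) (hlo : lo ≤ -3) (hhi : 1 ≤ hi)
    (hsub : S ⊆ Strip lo hi) (hcard : 9 < S.ncard) (hB : ¬ S ⊆ Block lo) : Strip lo hi ⊆ S := by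
  have hreach : ∀ u ∈ S, ∀ v ∈ S, DirReachable (StripArc lo hi) u v :=
    fun u hu v hv => dirReachable_stripArc hlo hhi (hsub hu) (hsub hv)
  have hnt : S.Nontrivial := (one_lt_ncard_iff_nontrivial_and_finite.1 (by omega)).1
  obtain ⟨p, hp, hpB⟩ := not_subset.1 hB
  have h11 : (1, 1) ∈ S := hS.one_one_mem hreach hnt (by omega) hp hpB
  have h00 : (0, 0) ∈ S := by
    rcases le_or_gt hi 2 with hhi2 | hhi2
    · have h01 := (hS.ring_mem hreach hnt (by omega) hhi h11).2.1
      exact hS.zero_zero_mem_of_le_two hreach hnt hhi2 hcard h01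
    · exact hS.zero_zero_mem_of_three_le hreach hnt (by omega) hhi2 h11
  exact hS.strip_subset_of_zero_zero_mem hreach hnt hlo hhi h00 h11

end Strip

section Grid

variable {j n : ℕ}

/-- The embedding of the vertices of `P_n □ P_3` into `ℤ × ℤ` that moves the (0-indexed) row `j` to
the row `0`, so that the image is `Strip (-j) (n - 1 - j)`. -/
def gridCoord (j : ℕ) (u : Fin n × Fin 3) : ℤ × ℤ := ((u.1 : ℤ) - j, (u.2 : ℤ))

theorem gridCoord_injective (j n : ℕ) : (gridCoord (n := n) j).Injective := by
  intro u v h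
  simp only [gridCoord, Prod.mk.injEq] at h
  ext <;> omega

theorem range_gridCoord (j n : ℕ) : range (gridCoord (n := n) j) = Strip (-j) (n - 1 - j) := by
  ext p
  constructor
  · rintro ⟨u, rfl⟩
    simp only [mem_strip, gridCoord]
    omega
  · intro hp
    rw [mem_strip] at hp
    refine ⟨(⟨(p.1 + j).toNat, by omega⟩, ⟨p.2.toNat, by omega⟩), ?_⟩
    simp only [gridCoord, Prod.ext_iff]
    omega

theorem gridGraph_adj_iff {u v : Fin n × Fin 3} :
    (gridGraph n 3).Adj u v ↔ gridDist (gridCoord j u) (gridCoord j v) = 1 := by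
  unfold gridGraph
  rw [SimpleGraph.boxProd_adj, SimpleGraph.pathGraph_adj, SimpleGraph.pathGraph_adj, Fin.ext_iff,
    Fin.ext_iff]
  simp only [gridDist, gridCoord]
  omega

/-- The orientation of `P_n □ P_3` read off from `StripArc` along `gridCoord j`. -/
def GridArc (j n : ℕ) : Fin n × Fin 3 → Fin n × Fin 3 → Prop :=
  gridCoord j ⁻¹'o StripArc (-j) (n - 1 - j)

theorem gridCoord_mem_strip (u : Fin n × Fin 3) : gridCoord j u ∈ Strip (-j) (n - 1 - j) :=
  range_gridCoord j n ▸ mem_range_self u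

theorem StripArc.mem_range_gridCoord (p q : ℤ × ℤ) (h : StripArc (-j) (n - 1 - j) p q) :
    q ∈ range (gridCoord (n := n) j) :=
  range_gridCoord j n ▸ h.2.1

theorem isOrientation_gridArc (j n : ℕ) : IsOrientation (gridGraph n 3) (GridArc j n) :=
  ⟨fun _ _ h => gridGraph_adj_iff.2 (StripArc.gridDist_eq_one h),
    fun u v h => stripArc_or_stripArc (gridCoord_mem_strip u) (gridCoord_mem_strip v)
      (gridGraph_adj_iff.1 h),
    fun _ _ h => StripArc.not_symm h⟩

theorem strongConnected_gridArc (hj : 3 ≤ j) (hjn : j + 2 ≤ n) :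
    StrongConnected (GridArc j n) := by
  intro u v
  obtain ⟨k, hk⟩ := dirReachable_stripArc (lo := -j) (hi := n - 1 - j) (by omega) (by omega)
    (gridCoord_mem_strip u) (gridCoord_mem_strip v)
  exact ⟨k, (hasDirWalk_preimage (gridCoord_injective j n) StripArc.mem_range_gridCoord).2 hk⟩

theorem dConvex_gridArc {S : Set (Fin n × Fin 3)} :
    DConvex (GridArc j n) S ↔ DConvex (StripArc (-j) (n - 1 - j)) (gridCoord j '' S) :=
  dConvex_preimage (gridCoord_injective j n) StripArc.mem_range_gridCoord

theorem exists_dConvex_gridArc_ncard_eq (hj : 3 ≤ j) (hjn : j + 2 ≤ n) :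
    ∃ S, DConvex (GridArc j n) S ∧ S ≠ univ ∧ S.ncard = 3 * j + 1 := by
  have himage : gridCoord (n := n) j '' (gridCoord j ⁻¹' Block (-j)) = Block (-j) := by
    refine image_preimage_eq_of_subset ?_
    rw [range_gridCoord]
    exact block_subset_strip (by omega) (by omega)
  have hcard : (gridCoord (n := n) j ⁻¹' Block (-j)).ncard = 3 * j + 1 := by
    rw [← ncard_image_of_injective _ (gridCoord_injective j n), himage, ncard_block (by omega)]
  refine ⟨gridCoord j ⁻¹' Block (-j), ?_, fun huniv => ?_, hcard⟩
  · rw [dConvex_gridArc, himage]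
    exact dConvex_block (by omega) (by omega)
  · rw [huniv, ncard_univ, Nat.card_prod, Nat.card_fin, Nat.card_fin] at hcard
    omega

theorem ncard_le_of_dConvex_gridArc (hj : 3 ≤ j) (hjn : j + 2 ≤ n) {S : Set (Fin n × Fin 3)}
    (hS : DConvex (GridArc j n) S) (hne : S ≠ univ) : S.ncard ≤ 3 * j + 1 := by
  by_contra! hcard
  have hinj := gridCoord_injective j n
  have hcard' : 3 * j + 1 < (gridCoord j '' S).ncard := by rwa [ncard_image_of_injective _ hinj]
  have hB : ¬ gridCoord j '' S ⊆ Block (-j) := by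
    intro hsub
    have := ncard_le_ncard hsub ((finite_strip _ _).union ((finite_Icc _ _).prod (finite_Icc _ _)))
    rw [ncard_block (by omega)] at this
    omega
  have hrange : range (gridCoord (n := n) j) ⊆ gridCoord j '' S := by
    rw [range_gridCoord]
    refine (dConvex_gridArc.1 hS).strip_subset (by omega) (by omega) ?_ (by omega) hB
    exact range_gridCoord j n ▸ image_subset_range _ _
  rw [← image_univ, image_subset_image_iff hinj] at hrange
  exact hne (univ_subset_iff.1 hrange)

end Grid

/-- Realizable values `3j + 1` in the strong convexity spectrum of `P_n □ P_3`. -/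
theorem three_j_add_one_mem_strongConvexitySpectrum_grid_n3 (n : ℕ) (hn : 2 ≤ n)
    (j : ℕ) (hjl : 3 ≤ j) (hju : j ≤ n - 2) :
    3 * j + 1 ∈ strongConvexitySpectrum (gridGraph n 3) := by
  have hjn : j + 2 ≤ n := by omega
  have hgreatest : IsGreatest {k | ∃ C, DConvex (GridArc j n) C ∧ C ≠ univ ∧ C.ncard = k}
      (3 * j + 1) := by
    refine ⟨exists_dConvex_gridArc_ncard_eq hjl hjn, ?_⟩
    rintro _ ⟨C, hC, hne, rfl⟩
    exact ncard_le_of_dConvex_gridArc hjl hjn hC hne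
  exact ⟨GridArc j n, isOrientation_gridArc j n, strongConnected_gridArc hjl hjn,
    hgreatest.csSup_eq⟩
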